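/- arXiv:1002.0110 — 2 statements merged into one kernel-verified Lean document; each statement's English description precedes it below -/
import Mathlib

section
/- For every fixed σ > 0, g(x; σ²) → 1 as x → +∞. (Consequently, for ‖x₀‖₀ = S the constrained Barankin bound BB_c(x₀) = S σ² + (N − S) σ² · (1 − ∏_{l ∈ supp(x₀)} g(x₀_l; σ²)) converges to S σ² as the smallest-magnitude nonzero entry ξ₀ = min_{k ∈ supp(x₀)} |x₀_k| tends to infinity, i.e., in the high-SNR regime.) -/
open MeasureTheory ProbabilityTheory Filter
open scoped ENNReal Classical

/-- The product Gaussian measure `P_x` on `ℝ^N` with mean `x` and variance `σ²` per coordinate. -/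
noncomputable def gaussP (N : ℕ) (σ : ℝ) (x : Fin N → ℝ) : Measure (Fin N → ℝ) :=
  MeasureTheory.Measure.pi fun i => gaussianReal (x i) (Real.toNNReal (σ ^ 2))

/-- The support of `x`: indices with nonzero entries. Its cardinality is `‖x‖₀`. -/
noncomputable def supp {N : ℕ} (x : Fin N → ℝ) : Finset (Fin N) :=
  Finset.univ.filter fun i => x i ≠ 0

/-- The sparse parameter set `X_S = {x : ‖x‖₀ ≤ S}`. -/
def sparseSet (N S : ℕ) : Set (Fin N → ℝ) := {x | (supp x).card ≤ S}

/-- An estimator is unbiased if each component is `P_x`-integrable with mean `x i`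
for every `x ∈ X_S`. -/
def Unbiased (N S : ℕ) (σ : ℝ) (est : (Fin N → ℝ) → Fin N → ℝ) : Prop :=
  ∀ x ∈ sparseSet N S, ∀ i,
    Integrable (fun y => est y i) (gaussP N σ x) ∧
    (∫ y, est y i ∂gaussP N σ x) = x i

/-- The MSE `ε(x; x̂) = ∫ ‖x̂(y) − x‖₂² dP_x(y)`, as an extended real. -/
noncomputable def MSE (N : ℕ) (σ : ℝ) (est : (Fin N → ℝ) → Fin N → ℝ)
    (x : Fin N → ℝ) : ℝ≥0∞ :=
  ∫⁻ y, ENNReal.ofReal (∑ i, (est y i - x i) ^ 2) ∂gaussP N σ x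

/-- `g(x; σ²) = (2/√(2πσ²)) ∫₀^∞ exp(−(y²+x²)/(2σ²)) sinh(yx/σ²) tanh(yx/σ²) dy`. -/
noncomputable def g (σ x : ℝ) : ℝ :=
  (2 / Real.sqrt (2 * Real.pi * σ ^ 2)) *
    ∫ y in Set.Ioi (0 : ℝ),
      Real.exp (-(y ^ 2 + x ^ 2) / (2 * σ ^ 2)) * Real.sinh (y * x / σ ^ 2) *
        Real.tanh (y * x / σ ^ 2)

theorem aux_tanh_eq (u : ℝ) : Real.tanh u = 1 - 2 * (Real.exp (2 * u) + 1)⁻¹ := by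
  rw [Real.tanh_eq]
  have h : Real.exp (2 * u) = Real.exp u * Real.exp u := by rw [← Real.exp_add]; ring_nf
  have h1 := Real.exp_pos u
  rw [h, Real.exp_neg]
  field_simp
  ring

theorem aux_tanh_cont : Continuous Real.tanh := by
  have : Real.tanh = fun u => 1 - 2 * (Real.exp (2 * u) + 1)⁻¹ := funext aux_tanh_eq
  rw [this]
  have h : ∀ u : ℝ, Real.exp (2 * u) + 1 ≠ 0 := fun u => by positivity
  fun_prop (disch := exact h _)

theorem aux_tanh_tendsto : Tendsto Real.tanh atTop (nhds 1) := by
  have : Real.tanh = fun u => 1 - 2 * (Real.exp (2 * u) + 1)⁻¹ := funext aux_tanh_eq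
  rw [this]
  have h1 : Tendsto (fun u : ℝ => Real.exp (2 * u) + 1) atTop atTop :=
    tendsto_atTop_add_const_right _ _
      (Real.tendsto_exp_atTop.comp (tendsto_id.const_mul_atTop (by norm_num : (0 : ℝ) < 2)))
  simpa using (h1.inv_tendsto_atTop.const_mul 2).const_sub 1

theorem aux_int (b x c : ℝ) (hb : 0 < b) :
    Integrable (fun z : ℝ => Real.exp (-b * z ^ 2) * Real.tanh ((z + x) * c)) := by
  refine (integrable_exp_neg_mul_sq hb).mono' ?_ ?_
  · have := aux_tanh_cont
    exact Continuous.aestronglyMeasurable (by fun_prop)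
  · filter_upwards with z
    rw [Real.norm_eq_abs, abs_mul, abs_of_pos (Real.exp_pos _)]
    exact mul_le_of_le_one_right (Real.exp_pos _).le (Real.abs_tanh_lt_one _).le

theorem aux_g (σ : ℝ) (hσ : 0 < σ) (x : ℝ) :
    g σ x = (1 / Real.sqrt (2 * Real.pi * σ ^ 2)) *
      ∫ z : ℝ, Real.exp (-(1 / (2 * σ ^ 2)) * z ^ 2) * Real.tanh ((z + x) * (x / σ ^ 2)) := by
  set b := 1 / (2 * σ ^ 2) with hb
  have hb0 : 0 < b := by positivity
  set h : ℝ → ℝ := fun y => Real.exp (-b * (y - x) ^ 2) * Real.tanh (y * (x / σ ^ 2)) with hh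
  have hint : Integrable h := by
    have := (aux_int b x (x / σ ^ 2) hb0).comp_sub_right x
    simpa [hh] using this
  have e1 : ∫ z : ℝ, Real.exp (-b * z ^ 2) * Real.tanh ((z + x) * (x / σ ^ 2)) = ∫ y, h y := by
    rw [← integral_sub_right_eq_self _ x]
    simp [hh]
  have e2 : ∫ y, h y = ∫ y in Set.Ioi (0 : ℝ), (h (-y) + h y) := by
    rw [integral_add hint.comp_neg.integrableOn hint.integrableOn, integral_comp_neg_Ioi, neg_zero,
      intervalIntegral.integral_Iic_add_Ioi hint.integrableOn hint.integrableOn]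
  have e3 : ∀ y, h (-y) + h y = 2 * (Real.exp (-(y ^ 2 + x ^ 2) / (2 * σ ^ 2)) *
      Real.sinh (y * x / σ ^ 2) * Real.tanh (y * x / σ ^ 2)) := by
    intro y
    have a1 : Real.exp (-b * (y - x) ^ 2) = Real.exp (-(y ^ 2 + x ^ 2) / (2 * σ ^ 2)) *
        Real.exp (y * x / σ ^ 2) := by
      rw [← Real.exp_add]; congr 1; rw [hb]; field_simp; ring
    have a2 : Real.exp (-b * (-y - x) ^ 2) = Real.exp (-(y ^ 2 + x ^ 2) / (2 * σ ^ 2)) *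
        Real.exp (-(y * x / σ ^ 2)) := by
      rw [← Real.exp_add]; congr 1; rw [hb]; field_simp; ring
    simp only [hh]
    rw [a1, a2, neg_mul, Real.tanh_neg, Real.sinh_eq, ← mul_div_assoc]
    ring
  rw [e1, e2]
  simp_rw [e3]
  rw [integral_const_mul, g]
  ring

/-- High-SNR limit: for fixed `σ > 0`, `g(x; σ²) → 1` as `x → +∞`. -/
theorem stmt_15 (σ : ℝ) (hσ : 0 < σ) :
    Filter.Tendsto (fun x => g σ x) Filter.atTop (nhds 1) := by
  have hs : 0 < σ ^ 2 := by positivity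
  have hb0 : 0 < 1 / (2 * σ ^ 2) := by positivity
  have key : Tendsto (fun x : ℝ => ∫ z : ℝ, Real.exp (-(1 / (2 * σ ^ 2)) * z ^ 2) *
      Real.tanh ((z + x) * (x / σ ^ 2))) atTop
      (nhds (∫ z : ℝ, Real.exp (-(1 / (2 * σ ^ 2)) * z ^ 2))) := by
    refine tendsto_integral_filter_of_dominated_convergence
      (fun z => Real.exp (-(1 / (2 * σ ^ 2)) * z ^ 2)) ?_ ?_ (integrable_exp_neg_mul_sq hb0) ?_
    · exact Eventually.of_forall fun x => (aux_int _ x _ hb0).aestronglyMeasurable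
    · refine Eventually.of_forall fun x => Eventually.of_forall fun z => ?_
      rw [Real.norm_eq_abs, abs_mul, abs_of_pos (Real.exp_pos _)]
      exact mul_le_of_le_one_right (Real.exp_pos _).le (Real.abs_tanh_lt_one _).le
    · refine Eventually.of_forall fun z => ?_
      have h1 : Tendsto (fun x : ℝ => (z + x) * (x / σ ^ 2)) atTop atTop :=
        (tendsto_atTop_add_const_left _ z tendsto_id).atTop_mul_atTop₀
          (tendsto_id.atTop_div_const hs)
      have h5 := (aux_tanh_tendsto.comp h1).const_mul (Real.exp (-(1 / (2 * σ ^ 2)) * z ^ 2))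
      rw [mul_one] at h5
      exact h5
  have h2 := key.const_mul (1 / Real.sqrt (2 * Real.pi * σ ^ 2))
  rw [integral_gaussian] at h2
  have h3 : Real.pi / (1 / (2 * σ ^ 2)) = 2 * Real.pi * σ ^ 2 := by field_simp
  have h4 : Real.sqrt (2 * Real.pi * σ ^ 2) ≠ 0 := by
    have := Real.pi_pos
    positivity
  rw [h3, one_div_mul_cancel h4] at h2
  exact h2.congr fun x => (aux_g σ hσ x).symm
end

section
/- Fix σ > 0, a nonempty index set I ⊆ {1, …, N} with |I| = p, and for t ≠ 0 take the test points v_i = t e_i for i ∈ I, where e_i is the i-th standard basis vector of ℝ^N. Let V_t ∈ ℝ^{N×p} be the matrix with columns (v_i)_{i ∈ I} and let J_t ∈ ℝ^{p×p} have entries (J_t)_{ij} = exp(v_iᵀ v_j / σ²) − 1. Then J_t is diagonal and invertible with Tr(V_t J_t⁻¹ V_tᵀ) = p · t² / (exp(t²/σ²) − 1), and this quantity converges to p σ² as t → 0 (so the Cramér–Rao bound is recovered as a limit of Hammersley–Chapman–Robbins bounds). -/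
open MeasureTheory ProbabilityTheory Filter
open scoped ENNReal Classical

/-- The matrix `V_t` whose columns are the test points `v_i = t e_i`, `i ∈ I`. -/
noncomputable def Vmat (N : ℕ) (I : Finset (Fin N)) (t : ℝ) : Matrix (Fin N) I ℝ :=
  Matrix.of fun n i => if (i : Fin N) = n then t else 0

/-- The matrix `J_t` with entries `(J_t)_{ij} = exp(v_iᵀ v_j / σ²) − 1`. -/
noncomputable def Jmat (N : ℕ) (I : Finset (Fin N)) (σ t : ℝ) : Matrix I I ℝ :=
  Matrix.of fun i j =>
    Real.exp ((∑ n, Vmat N I t n i * Vmat N I t n j) / σ ^ 2) - 1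

theorem aux_VtV (N : ℕ) (I : Finset (Fin N)) (t : ℝ) (i j : I) :
    (∑ n, Vmat N I t n i * Vmat N I t n j) = if i = j then t ^ 2 else 0 := by
  have h : ∀ n, Vmat N I t n i * Vmat N I t n j
      = if (i : Fin N) = n then (if i = j then t ^ 2 else 0) else 0 := by
    intro n
    simp only [Vmat, Matrix.of_apply]
    by_cases h1 : (i : Fin N) = n
    · by_cases h2 : i = j
      · subst h2
        simp [h1, sq]
      · have h3 : ¬ (j : Fin N) = n := fun h => h2 (Subtype.ext (h1.trans h.symm))
        simp [h2, h3]
    · simp [h1]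
  rw [Finset.sum_congr rfl (fun n _ => h n)]
  simp

theorem aux_J (N : ℕ) (I : Finset (Fin N)) (σ t : ℝ) :
    Jmat N I σ t = (Real.exp (t ^ 2 / σ ^ 2) - 1) • (1 : Matrix I I ℝ) := by
  ext i j
  simp only [Jmat, Matrix.of_apply, aux_VtV, Matrix.smul_apply, Matrix.one_apply]
  by_cases h : i = j
  · simp [h]
  · simp [h]

theorem aux_c (σ t : ℝ) (hσ : 0 < σ) (ht : t ≠ 0) : Real.exp (t ^ 2 / σ ^ 2) - 1 ≠ 0 := by
  have h : 0 < t ^ 2 / σ ^ 2 := by positivity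
  have := Real.one_lt_exp_iff.mpr h
  linarith

theorem aux_tr (N : ℕ) (I : Finset (Fin N)) (σ t : ℝ) (hσ : 0 < σ) (ht : t ≠ 0) :
    Matrix.trace (Vmat N I t * (Jmat N I σ t)⁻¹ * (Vmat N I t).transpose)
        = (I.card : ℝ) * t ^ 2 / (Real.exp (t ^ 2 / σ ^ 2) - 1) := by
  have hc := aux_c σ t hσ ht
  have hinv : (Jmat N I σ t)⁻¹ = (Real.exp (t ^ 2 / σ ^ 2) - 1)⁻¹ • (1 : Matrix I I ℝ) := by
    apply Matrix.inv_eq_right_inv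
    rw [aux_J]
    simp [smul_smul, hc]
  have hV : (Vmat N I t).transpose * Vmat N I t = (t ^ 2) • (1 : Matrix I I ℝ) := by
    ext i j
    simp only [Matrix.mul_apply, Matrix.transpose_apply, aux_VtV, Matrix.smul_apply,
      Matrix.one_apply]
    simp
  rw [hinv, Matrix.mul_smul, Matrix.mul_one, Matrix.smul_mul, Matrix.trace_smul,
    Matrix.trace_mul_comm, hV, Matrix.trace_smul, Matrix.trace_one]
  simp only [Fintype.card_coe, smul_eq_mul]
  ring

theorem aux_lim (σ : ℝ) (hσ : 0 < σ) :
    Filter.Tendsto (fun t : ℝ => t ^ 2 / (Real.exp (t ^ 2 / σ ^ 2) - 1))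
      (nhdsWithin 0 {(0 : ℝ)}ᶜ) (nhds (σ ^ 2)) := by
  have h1 := (hasDerivAt_iff_tendsto_slope.mp (Real.hasDerivAt_exp 0))
  have h2 : Filter.Tendsto (fun t : ℝ => t ^ 2 / σ ^ 2) (nhdsWithin 0 {(0 : ℝ)}ᶜ)
      (nhdsWithin 0 {(0 : ℝ)}ᶜ) := by
    apply tendsto_nhdsWithin_iff.mpr
    constructor
    · have : Continuous (fun t : ℝ => t ^ 2 / σ ^ 2) := by fun_prop
      have h := this.tendsto 0
      simp only [ne_eq, OfNat.ofNat_ne_zero, not_false_eq_true, zero_pow, zero_div] at h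
      exact h.mono_left nhdsWithin_le_nhds
    · filter_upwards [self_mem_nhdsWithin] with t ht
      have ht' : t ≠ 0 := ht
      have : t ^ 2 / σ ^ 2 ≠ 0 := by positivity
      exact this
  have h3 := ((h1.comp h2).inv₀ (by simp)).const_mul (σ ^ 2)
  simp only [Real.exp_zero, inv_one, mul_one] at h3
  refine h3.congr ?_
  intro t
  simp only [Function.comp, slope_def_field, Real.exp_zero, sub_zero, inv_div]
  field_simp

/-- For test points `v_i = t e_i` (`i ∈ I`, `t ≠ 0`), `J_t` is diagonal and invertible with
`Tr(V_t J_t⁻¹ V_tᵀ) = p t² / (exp(t²/σ²) − 1)`, and this quantity converges to `p σ²` as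
`t → 0`: the Cramér–Rao bound is recovered as a limit of HCR bounds. -/
theorem stmt_16 (N : ℕ) (hN : 1 ≤ N) (σ : ℝ) (hσ : 0 < σ)
    (I : Finset (Fin N)) (hI : I.Nonempty) (p : ℕ) (hp : I.card = p) :
    (∀ t : ℝ, t ≠ 0 →
      (Jmat N I σ t).IsDiag ∧ IsUnit (Jmat N I σ t) ∧
      Matrix.trace (Vmat N I t * (Jmat N I σ t)⁻¹ * (Vmat N I t).transpose)
        = (p : ℝ) * t ^ 2 / (Real.exp (t ^ 2 / σ ^ 2) - 1)) ∧
    Filter.Tendsto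
      (fun t : ℝ =>
        Matrix.trace (Vmat N I t * (Jmat N I σ t)⁻¹ * (Vmat N I t).transpose))
      (nhdsWithin 0 {(0 : ℝ)}ᶜ) (nhds ((p : ℝ) * σ ^ 2)) := by
  subst hp
  refine ⟨fun t ht => ⟨?_, ?_, aux_tr N I σ t hσ ht⟩, ?_⟩
  · rw [aux_J]
    exact Matrix.isDiag_one.smul _
  · rw [aux_J]
    exact (isUnit_one).smul (Units.mk0 _ (aux_c σ t hσ ht))
  · refine ((aux_lim σ hσ).const_mul (I.card : ℝ)).congr' ?_
    filter_upwards [self_mem_nhdsWithin] with t ht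
    rw [aux_tr N I σ t hσ ht, mul_div_assoc]
end
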